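/- (Closed form of the iDEA cost function) For every φ ∈ ℝ, the cost Q_tx(φ) = (u_1 − exp(j·φ)·u_3)^† R (u_1 − exp(j·φ)·u_3) satisfies Q_tx(φ) = 4^{2K−1} · Σ_{k=1}^{K} σ_k² · sin²((ε_tx,k − φ)/2) · ∏_{m=1}^{K−1} sin²((ε_tx,k − ε̂_tx,m)/2) · ∏_{n=1}^{K−1} sin²((ε_rx,k − ε̂_rx,n)/2); in particular Q_tx(φ) is real and nonnegative. -/

import Mathlib

open scoped BigOperators

/-- Steering vector `a(ε) ∈ ℂ^{n+1}` with entries `exp(j·i·ε)`, `i = 0,…,n`. -/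
noncomputable def steer (n : ℕ) (ε : ℝ) : Fin (n + 1) → ℂ :=
  fun i => Complex.exp (Complex.I * ((i : ℕ) : ℂ) * (ε : ℂ))

/-- The vector `E(η_1,…,η_m) ∈ ℂ^{m+1}` defined recursively by
`E(η_1) = (1, −exp(j·η_1))` and
`E(η_1,…,η_p) = (E(η_1,…,η_{p−1}), 0) − exp(j·η_p)·(0, E(η_1,…,η_{p−1}))`
(with base case `E() = (1)`, which reproduces the stated base case at `m = 1`). -/
noncomputable def Evec : (m : ℕ) → (Fin m → ℝ) → (Fin (m + 1) → ℂ)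
  | 0, _ => fun _ => 1
  | m + 1, η => fun i =>
      Fin.snoc (α := fun _ => ℂ) (Evec m fun j => η j.castSucc) 0 i -
        Complex.exp (Complex.I * (η (Fin.last m) : ℂ)) *
          Fin.cons (α := fun _ => ℂ) 0 (Evec m fun j => η j.castSucc) i

/-- The cyclic down-shift matrix on `ℂ^{n+1}`: `(Lv)_0 = v_n`, `(Lv)_i = v_{i−1}` for `i ≥ 1`. -/
def Lmat (n : ℕ) : Matrix (Fin (n + 1)) (Fin (n + 1)) ℂ :=
  Matrix.of fun i l => if l = i - 1 then 1 else 0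

/-- Kronecker product of vectors: `(v ⊗ w)_{(i,l)} = v_i · w_l`. -/
def kron {a b : Type*} (v : a → ℂ) (w : b → ℂ) : a × b → ℂ :=
  fun p => v p.1 * w p.2

/-- `x^† y = Σ_i conj(x_i) · y_i`. -/
noncomputable def ip {n : Type*} [Fintype n] (x y : n → ℂ) : ℂ :=
  ∑ i, (starRingEnd ℂ) (x i) * y i

/-- `x^† M y = Σ_{i,l} conj(x_i) · M_{i,l} · y_l`. -/
noncomputable def qf {n : Type*} [Fintype n] (x : n → ℂ) (M : Matrix n n ℂ) (y : n → ℂ) : ℂ :=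
  ∑ i, ∑ l, (starRingEnd ℂ) (x i) * M i l * y l

/-- `E(η_1,…,η_Kp) ∈ ℂ^{Kp+1}` padded with a trailing zero, giving a vector in `ℂ^{Kp+2}`. -/
noncomputable def Epad (Kp : ℕ) (η : Fin Kp → ℝ) : Fin (Kp + 2) → ℂ :=
  Fin.snoc (Evec Kp η) 0

/-- `u_0 = Ẽ_tx ⊗ Ẽ_rx`. -/
noncomputable def u0 (Kp : ℕ) (ηt ηr : Fin Kp → ℝ) : Fin (Kp + 2) × Fin (Kp + 2) → ℂ :=
  kron (Epad Kp ηt) (Epad Kp ηr)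

/-- `u_1 = Ẽ_tx ⊗ (L·Ẽ_rx)`. -/
noncomputable def u1 (Kp : ℕ) (ηt ηr : Fin Kp → ℝ) : Fin (Kp + 2) × Fin (Kp + 2) → ℂ :=
  kron (Epad Kp ηt) ((Lmat (Kp + 1)).mulVec (Epad Kp ηr))

/-- `u_2 = (L·Ẽ_tx) ⊗ Ẽ_rx`. -/
noncomputable def u2 (Kp : ℕ) (ηt ηr : Fin Kp → ℝ) : Fin (Kp + 2) × Fin (Kp + 2) → ℂ :=
  kron ((Lmat (Kp + 1)).mulVec (Epad Kp ηt)) (Epad Kp ηr)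

/-- `u_3 = (L·Ẽ_tx) ⊗ (L·Ẽ_rx)`. -/
noncomputable def u3 (Kp : ℕ) (ηt ηr : Fin Kp → ℝ) : Fin (Kp + 2) × Fin (Kp + 2) → ℂ :=
  kron ((Lmat (Kp + 1)).mulVec (Epad Kp ηt)) ((Lmat (Kp + 1)).mulVec (Epad Kp ηr))

/-- The noiseless auto-correlation matrix `R = Σ_{k=1}^K σ_k² A_k A_k^†`, where
`A_k = a(ε_tx,k) ⊗ a(ε_rx,k)` and `σsq k` is the power `σ_k²`. -/
noncomputable def Rmat (K : ℕ) (εtx εrx σsq : Fin K → ℝ) :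
    Matrix (Fin (K + 1) × Fin (K + 1)) (Fin (K + 1) × Fin (K + 1)) ℂ :=
  Matrix.of fun p q => ∑ k, (σsq k : ℂ) *
    kron (steer K (εtx k)) (steer K (εrx k)) p *
    (starRingEnd ℂ) (kron (steer K (εtx k)) (steer K (εrx k)) q)

/-- The rank-one matrix `R_ε = a(ε) a(ε)^† ∈ ℂ^{(Kp+2)×(Kp+2)}`. -/
noncomputable def Rsingle (Kp : ℕ) (ε : ℝ) : Matrix (Fin (Kp + 2)) (Fin (Kp + 2)) ℂ :=
  Matrix.of fun i l => steer (Kp + 1) ε i * (starRingEnd ℂ) (steer (Kp + 1) ε l)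

/-- The iDEA cost `Q_tx(φ) = (u_1 − exp(j·φ)·u_3)^† R (u_1 − exp(j·φ)·u_3)`. -/
noncomputable def Qcost (Kp : ℕ) (εtx εrx σsq : Fin (Kp + 1) → ℝ)
    (ηt ηr : Fin Kp → ℝ) (φ : ℝ) : ℂ :=
  qf (u1 Kp ηt ηr - Complex.exp (Complex.I * (φ : ℂ)) • u3 Kp ηt ηr)
    (Rmat (Kp + 1) εtx εrx σsq)
    (u1 Kp ηt ηr - Complex.exp (Complex.I * (φ : ℂ)) • u3 Kp ηt ηr)

/-- The closed-form value `4^{2K−1} · Σ_k σ_k² sin²((ε_tx,k − φ)/2) ∏_m sin²((ε_tx,k − ε̂_tx,m)/2)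
∏_n sin²((ε_rx,k − ε̂_rx,n)/2)` (here `K = Kp + 1`, so `2K − 1 = 2·Kp + 1`). -/
noncomputable def Ssum (Kp : ℕ) (εtx εrx σsq : Fin (Kp + 1) → ℝ)
    (ηt ηr : Fin Kp → ℝ) (φ : ℝ) : ℝ :=
  (4 : ℝ) ^ (2 * Kp + 1) * ∑ k, σsq k * Real.sin ((εtx k - φ) / 2) ^ 2 *
    (∏ m, Real.sin ((εtx k - ηt m) / 2) ^ 2) *
    (∏ n, Real.sin ((εrx k - ηr n) / 2) ^ 2)

/-- The `k = K` term of `Ssum`, i.e. the lower bound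
`4^{2K−1} · σ_K² sin²((ε_tx,K − φ)/2) ∏_m sin²((ε_tx,K − ε̂_tx,m)/2) ∏_n sin²((ε_rx,K − ε̂_rx,n)/2)`. -/
noncomputable def Slb (Kp : ℕ) (εtx εrx σsq : Fin (Kp + 1) → ℝ)
    (ηt ηr : Fin Kp → ℝ) (φ : ℝ) : ℝ :=
  (4 : ℝ) ^ (2 * Kp + 1) * σsq (Fin.last Kp) *
    Real.sin ((εtx (Fin.last Kp) - φ) / 2) ^ 2 *
    (∏ m, Real.sin ((εtx (Fin.last Kp) - ηt m) / 2) ^ 2) *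
    (∏ n, Real.sin ((εrx (Fin.last Kp) - ηr n) / 2) ^ 2)

/-!
Pairing `x` with the steering vector `a(ε)` evaluates the polynomial with coefficients `x` at
`exp(-j·ε)`. The recursion for `E(η_1,…,η_m)` says that its polynomial is `∏ (1 - exp(j·η_i) X)`,
and the cyclic shift of a vector padded with a zero is multiplication by `X`, which does not change
moduli on the unit circle. Hence `u_1 - exp(j·φ) u_3 = E(ε̂_tx, φ) ⊗ (L Ẽ_rx)`: the candidate `φ`
is simply one more root. As `R` is a weighted sum of rank-one matrices,
`x^† R x = ∑ σ_k² |A_k^† x|²`; each pairing splits over `⊗`, and each root contributes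
`|1 - exp(j·(η - ε))|² = 4 sin²((ε - η)/2)`.
-/

section

open Complex Matrix

open scoped ComplexConjugate

lemma ip_eq_star_dotProduct {n : Type*} [Fintype n] (x y : n → ℂ) : ip x y = star x ⬝ᵥ y := rfl

lemma ip_sub_smul {n : Type*} [Fintype n] (x y z : n → ℂ) (c : ℂ) :
    ip x (y - c • z) = ip x y - c * ip x z := by
  simp [ip_eq_star_dotProduct]

lemma conj_ip {n : Type*} [Fintype n] (x y : n → ℂ) : conj (ip x y) = ip y x := by
  simp [ip, mul_comm]

lemma qf_eq_ip_mulVec {n : Type*} [Fintype n] (x y : n → ℂ) (M : Matrix n n ℂ) :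
    qf x M y = ip x (M *ᵥ y) := by
  simp [qf, ip, mulVec, dotProduct, Finset.mul_sum, mul_assoc]

lemma qf_sum_smul_vecMulVec_star {ι n : Type*} [Fintype ι] [Fintype n] (c : ι → ℝ)
    (A : ι → n → ℂ) (x : n → ℂ) :
    qf x (∑ k, (c k : ℂ) • vecMulVec (A k) (star (A k))) x =
      ((∑ k, c k * ‖ip (A k) x‖ ^ 2 : ℝ) : ℂ) := by
  rw [qf_eq_ip_mulVec, sum_mulVec, ip_eq_star_dotProduct, dotProduct_sum, ofReal_sum]
  refine Finset.sum_congr rfl fun k _ => ?_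
  simp only [smul_mulVec, vecMulVec_mulVec, dotProduct_smul, ← ip_eq_star_dotProduct]
  rw [← conj_ip (A k) x]
  simp [mul_conj', mul_comm]

section Kronecker

variable {a b : Type*}

lemma kron_sub_smul_left (v v' : a → ℂ) (w : b → ℂ) (c : ℂ) :
    kron (v - c • v') w = kron v w - c • kron v' w := by
  ext p
  simp only [kron, Pi.sub_apply, Pi.smul_apply, smul_eq_mul]
  ring

lemma ip_kron [Fintype a] [Fintype b] (v v' : a → ℂ) (w w' : b → ℂ) :
    ip (kron v w) (kron v' w') = ip v v' * ip w w' := by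
  simp only [ip, kron, map_mul, Fintype.sum_prod_type, Finset.sum_mul_sum, mul_mul_mul_comm]

end Kronecker

lemma Rmat_eq_sum_smul_vecMulVec (K : ℕ) (εtx εrx σsq : Fin K → ℝ) :
    Rmat K εtx εrx σsq = ∑ k, (σsq k : ℂ) • vecMulVec (kron (steer K (εtx k)) (steer K (εrx k)))
      (star (kron (steer K (εtx k)) (steer K (εrx k)))) := by
  ext p q
  simp [Rmat, Matrix.sum_apply, vecMulVec_apply, mul_assoc]

lemma qf_Rmat_kron (K : ℕ) (εtx εrx σsq : Fin K → ℝ) (v w : Fin (K + 1) → ℂ) :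
    qf (kron v w) (Rmat K εtx εrx σsq) (kron v w) =
      ((∑ k, σsq k * (‖ip (steer K (εtx k)) v‖ ^ 2 * ‖ip (steer K (εrx k)) w‖ ^ 2) : ℝ) : ℂ) := by
  simp only [Rmat_eq_sum_smul_vecMulVec, qf_sum_smul_vecMulVec_star, ip_kron, norm_mul, mul_pow]

lemma Lmat_mulVec_apply (n : ℕ) (v : Fin (n + 1) → ℂ) (i : Fin (n + 1)) :
    (Lmat n *ᵥ v) i = v (i - 1) := by
  simp [Lmat, mulVec, dotProduct]

lemma Lmat_mulVec_snoc (n : ℕ) (v : Fin n → ℂ) (c : ℂ) :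
    Lmat n *ᵥ Fin.snoc (α := fun _ => ℂ) v c = Fin.cons (α := fun _ => ℂ) c v := by
  ext i
  rw [Lmat_mulVec_apply]
  cases i using Fin.cases with
  | zero =>
    simp [show (0 : Fin (n + 1)) - 1 = Fin.last n by rw [sub_eq_iff_eq_add, Fin.last_add_one]]
  | succ i => simp [show i.succ - 1 = i.castSucc by simp [sub_eq_iff_eq_add]]

lemma Evec_snoc (m : ℕ) (η : Fin m → ℝ) (φ : ℝ) :
    Evec (m + 1) (Fin.snoc (α := fun _ => ℝ) η φ) =
      Epad m η - exp (I * φ) • (Lmat (m + 1) *ᵥ Epad m η) := by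
  ext i
  simp [Evec, Epad, Lmat_mulVec_snoc]

lemma u1_sub_smul_u3 (Kp : ℕ) (ηt ηr : Fin Kp → ℝ) (φ : ℝ) :
    u1 Kp ηt ηr - exp (I * φ) • u3 Kp ηt ηr =
      kron (Evec (Kp + 1) (Fin.snoc (α := fun _ => ℝ) ηt φ))
        (Lmat (Kp + 1) *ᵥ Epad Kp ηr) := by
  rw [Evec_snoc, kron_sub_smul_left, u1, u3]

lemma steer_castSucc (n : ℕ) (ε : ℝ) (i : Fin (n + 1)) :
    steer (n + 1) ε i.castSucc = steer n ε i := rfl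

lemma steer_succ (n : ℕ) (ε : ℝ) (i : Fin (n + 1)) :
    steer (n + 1) ε i.succ = exp (I * ε) * steer n ε i := by
  simp only [steer, ← exp_add, Fin.val_succ, Nat.cast_succ]
  ring_nf

lemma ip_steer_Epad (m : ℕ) (ε : ℝ) (η : Fin m → ℝ) :
    ip (steer (m + 1) ε) (Epad m η) = ip (steer m ε) (Evec m η) := by
  simp [ip, Epad, Fin.sum_univ_castSucc (n := m + 1), steer_castSucc]

lemma ip_steer_Lmat_mulVec_Epad (m : ℕ) (ε : ℝ) (η : Fin m → ℝ) :
    ip (steer (m + 1) ε) (Lmat (m + 1) *ᵥ Epad m η) =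
      exp (-(I * ε)) * ip (steer m ε) (Evec m η) := by
  simp [ip, Epad, Lmat_mulVec_snoc, Fin.sum_univ_succ (n := m + 1), steer_succ, Finset.mul_sum,
    mul_assoc, ← exp_conj]

lemma ip_steer_Evec (m : ℕ) (ε : ℝ) (η : Fin m → ℝ) :
    ip (steer m ε) (Evec m η) = ∏ i, (1 - exp (I * (η i - ε : ℝ))) := by
  induction η using Fin.snocInduction with
  | elim0 => simp [ip, steer, Evec]
  | @snoc m η φ ih =>
    have root_factor : exp (I * φ) * exp (-(I * ε)) = exp (I * (φ - ε : ℝ)) := by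
      rw [← exp_add]
      push_cast
      ring_nf
    rw [Evec_snoc, ip_sub_smul, ip_steer_Epad, ip_steer_Lmat_mulVec_Epad, ← mul_assoc,
      root_factor, ih]
    simp only [Fin.prod_univ_castSucc, Fin.snoc_castSucc, Fin.snoc_last]
    ring

lemma norm_sq_one_sub_exp_I_mul_ofReal (θ : ℝ) :
    ‖1 - exp (I * θ)‖ ^ 2 = 4 * Real.sin (θ / 2) ^ 2 := by
  rw [norm_sub_rev, norm_exp_I_mul_ofReal_sub_one, Real.norm_eq_abs, sq_abs, mul_pow]
  norm_num

lemma norm_sq_ip_steer_Evec (m : ℕ) (ε : ℝ) (η : Fin m → ℝ) :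
    ‖ip (steer m ε) (Evec m η)‖ ^ 2 = 4 ^ m * ∏ i, Real.sin ((ε - η i) / 2) ^ 2 := by
  have sin_sq_neg (i : Fin m) :
      Real.sin ((η i - ε) / 2) ^ 2 = Real.sin ((ε - η i) / 2) ^ 2 := by
    rw [← neg_sub, neg_div, Real.sin_neg, neg_sq]
  simp only [ip_steer_Evec, norm_prod, ← Finset.prod_pow, norm_sq_one_sub_exp_I_mul_ofReal,
    sin_sq_neg, Finset.prod_mul_distrib, Finset.prod_const, Finset.card_univ, Fintype.card_fin]

lemma norm_ip_steer_Lmat_mulVec_Epad (m : ℕ) (ε : ℝ) (η : Fin m → ℝ) :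
    ‖ip (steer (m + 1) ε) (Lmat (m + 1) *ᵥ Epad m η)‖ = ‖ip (steer m ε) (Evec m η)‖ := by
  rw [ip_steer_Lmat_mulVec_Epad, norm_mul, ← mul_neg, ← ofReal_neg, norm_exp_I_mul_ofReal, one_mul]

lemma Qcost_eq_Ssum (Kp : ℕ) (εtx εrx σsq : Fin (Kp + 1) → ℝ) (ηt ηr : Fin Kp → ℝ) (φ : ℝ) :
    Qcost Kp εtx εrx σsq ηt ηr φ = (Ssum Kp εtx εrx σsq ηt ηr φ : ℂ) := by
  rw [Qcost, u1_sub_smul_u3, qf_Rmat_kron, Ssum, Finset.mul_sum]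
  congr 1
  refine Finset.sum_congr rfl fun k _ => ?_
  rw [norm_ip_steer_Lmat_mulVec_Epad, norm_sq_ip_steer_Evec, norm_sq_ip_steer_Evec,
    Fin.prod_univ_castSucc]
  simp only [Fin.snoc_castSucc, Fin.snoc_last]
  ring

lemma Ssum_nonneg (Kp : ℕ) (εtx εrx : Fin (Kp + 1) → ℝ) {σsq : Fin (Kp + 1) → ℝ}
    (hσ : ∀ k, 0 ≤ σsq k) (ηt ηr : Fin Kp → ℝ) (φ : ℝ) : 0 ≤ Ssum Kp εtx εrx σsq ηt ηr φ :=
  mul_nonneg (by positivity) <| Finset.sum_nonneg fun k _ => by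
    have := hσ k
    positivity

end

/-- closed form of the iDEA cost function: for every φ ∈ ℝ,
Q_tx(φ) = 4^{2K−1} · Σ_k σ_k² sin²((ε_tx,k − φ)/2) ∏_m sin²((ε_tx,k − ε̂_tx,m)/2)
∏_n sin²((ε_rx,k − ε̂_rx,n)/2); in particular Q_tx(φ) is real and nonnegative. -/
theorem statement18 (Kp : ℕ) (hKp : 1 ≤ Kp) (εtx εrx : Fin (Kp + 1) → ℝ)
    (σsq : Fin (Kp + 1) → ℝ) (hσ : ∀ k, 0 < σsq k) (ηt ηr : Fin Kp → ℝ) (φ : ℝ) :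
    Qcost Kp εtx εrx σsq ηt ηr φ = ((Ssum Kp εtx εrx σsq ηt ηr φ : ℝ) : ℂ) ∧
    0 ≤ Ssum Kp εtx εrx σsq ηt ηr φ :=
  ⟨Qcost_eq_Ssum Kp εtx εrx σsq ηt ηr φ,
    Ssum_nonneg Kp εtx εrx (fun k => (hσ k).le) ηt ηr φ⟩
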